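/- Let g(x) = (1/2) √(π/2) exp( −(1/4) e^z + z/2 ) where z = π x/√2 − γ and γ is the Euler–Mascheroni constant. Then the fourth moment satisfies ∫_ℝ x⁴ g(x) dx = 7; in particular, since g has mean 0 and variance 1, the excess kurtosis of the distribution with density g equals 7 − 3 = 4. -/

import Mathlib

open MeasureTheory Real

/-!
If `x` has density `g`, then `e ^ z` has the Gamma distribution with shape `1 / 2` and rate `1 / 4`,
so `x` is `√2 / π` times the centred logarithm of a Gamma variable. The moment generating function
of `X = log V`, for `V` of shape `1 / 2` and rate `r`, is `M t = Γ(1 / 2 + t) / (√π r ^ t)`, and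
Euler's reflection formula gives `M t * M (-t) = 1 / cos (π t)`: the difference of two independent
copies of `X` follows a hyperbolic secant law, with second and fourth moments `π ^ 2` and `5 π ^ 4`.
These are `2 μ₂` and `2 μ₄ + 6 μ₂ ^ 2` in terms of the central moments of `X`, whence
`μ₂ = π ^ 2 / 2` and `μ₄ = 7 π ^ 4 / 4`.
-/

open ProbabilityTheory Filter Topology Set

section IteratedDeriv

variable {𝕜 : Type*} [NontriviallyNormedField 𝕜] {f : 𝕜 → 𝕜} {n : ℕ}

lemma sum_choose_mul_iteratedDeriv_inv_mul_iteratedDeriv {x : 𝕜} (hn : n ≠ 0)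
    (hf : ContDiffAt 𝕜 n f x) (hfx : f x ≠ 0) :
    ∑ i ∈ Finset.range (n + 1), n.choose i * iteratedDeriv i f⁻¹ x * iteratedDeriv (n - i) f x =
      0 := by
  have hinv_mul : f⁻¹ * f =ᶠ[𝓝 x] fun _ ↦ 1 :=
    (hf.continuousAt.eventually_ne hfx).mono fun _ hy ↦ inv_mul_cancel₀ hy
  rw [← iteratedDeriv_mul (hf.inv hfx) hf, hinv_mul.iteratedDeriv_eq, iteratedDeriv_const,
    if_neg hn]

lemma iteratedDeriv_mul_comp_neg_zero (hf : ContDiffAt 𝕜 n f 0) :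
    iteratedDeriv n (fun t ↦ f t * f (-t)) 0 =
      ∑ i ∈ Finset.range (n + 1),
        n.choose i * iteratedDeriv i f 0 * ((-1) ^ (n - i) * iteratedDeriv (n - i) f 0) := by
  have hf_neg : ContDiffAt 𝕜 n (fun t ↦ f (-t)) 0 :=
    ContDiffAt.comp (g := f) 0 (by simpa using hf) contDiffAt_id.neg
  simp_rw [iteratedDeriv_fun_mul hf hf_neg, iteratedDeriv_comp_neg, neg_zero, smul_eq_mul]

end IteratedDeriv

section Secant

variable (ω : ℝ)

lemma iteratedDeriv_cos_const_mul_zero (n : ℕ) :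
    iteratedDeriv n (fun t ↦ cos (ω * t)) 0 = ω ^ n * iteratedDeriv n cos 0 := by
  simp [iteratedDeriv_comp_const_mul (contDiff_cos.of_le le_top)]

lemma iteratedDeriv_even_cos_const_mul_zero (n : ℕ) :
    iteratedDeriv (2 * n) (fun t ↦ cos (ω * t)) 0 = (-1) ^ n * ω ^ (2 * n) := by
  rw [iteratedDeriv_cos_const_mul_zero, iteratedDeriv_even_cos]
  simp [mul_comm]

lemma iteratedDeriv_odd_cos_const_mul_zero (n : ℕ) :
    iteratedDeriv (2 * n + 1) (fun t ↦ cos (ω * t)) 0 = 0 := by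
  simp [iteratedDeriv_cos_const_mul_zero]

lemma sum_choose_mul_iteratedDeriv_sec_zero {n : ℕ} (hn : n ≠ 0) :
    ∑ i ∈ Finset.range (n + 1), n.choose i * iteratedDeriv i (fun t ↦ (cos (ω * t))⁻¹) 0 *
      iteratedDeriv (n - i) (fun t ↦ cos (ω * t)) 0 = 0 :=
  sum_choose_mul_iteratedDeriv_inv_mul_iteratedDeriv hn (by fun_prop) (by simp)

lemma iteratedDeriv_two_sec_zero : iteratedDeriv 2 (fun t ↦ (cos (ω * t))⁻¹) 0 = ω ^ 2 := by
  have hcos₁ : iteratedDeriv 1 (fun t ↦ cos (ω * t)) 0 = 0 :=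
    iteratedDeriv_odd_cos_const_mul_zero ω 0
  have hcos₂ : iteratedDeriv 2 (fun t ↦ cos (ω * t)) 0 = (-1) ^ 1 * ω ^ 2 :=
    iteratedDeriv_even_cos_const_mul_zero ω 1
  have hrec : iteratedDeriv 2 (fun t ↦ (cos (ω * t))⁻¹) 0 - ω ^ 2 = 0 := by
    refine .trans ?_ (sum_choose_mul_iteratedDeriv_sec_zero ω two_ne_zero)
    simp only [Finset.sum_range_succ, Finset.sum_range_zero, Nat.choose, Nat.reduceAdd,
      Nat.reduceSub, iteratedDeriv_zero, mul_zero, cos_zero, inv_one, hcos₁, hcos₂]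
    ring
  exact sub_eq_zero.1 hrec

lemma iteratedDeriv_four_sec_zero : iteratedDeriv 4 (fun t ↦ (cos (ω * t))⁻¹) 0 = 5 * ω ^ 4 := by
  have hcos₁ : iteratedDeriv 1 (fun t ↦ cos (ω * t)) 0 = 0 :=
    iteratedDeriv_odd_cos_const_mul_zero ω 0
  have hcos₂ : iteratedDeriv 2 (fun t ↦ cos (ω * t)) 0 = (-1) ^ 1 * ω ^ 2 :=
    iteratedDeriv_even_cos_const_mul_zero ω 1
  have hcos₃ : iteratedDeriv 3 (fun t ↦ cos (ω * t)) 0 = 0 :=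
    iteratedDeriv_odd_cos_const_mul_zero ω 1
  have hcos₄ : iteratedDeriv 4 (fun t ↦ cos (ω * t)) 0 = (-1) ^ 2 * ω ^ 4 :=
    iteratedDeriv_even_cos_const_mul_zero ω 2
  have hrec : iteratedDeriv 4 (fun t ↦ (cos (ω * t))⁻¹) 0 -
      6 * ω ^ 2 * iteratedDeriv 2 (fun t ↦ (cos (ω * t))⁻¹) 0 + ω ^ 4 = 0 := by
    refine .trans ?_ (sum_choose_mul_iteratedDeriv_sec_zero ω four_ne_zero)
    simp only [Finset.sum_range_succ, Finset.sum_range_zero, Nat.choose, Nat.reduceAdd,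
      Nat.reduceSub, iteratedDeriv_zero, mul_zero, cos_zero, inv_one, hcos₁, hcos₂, hcos₃, hcos₄]
    ring
  rw [iteratedDeriv_two_sec_zero] at hrec
  linear_combination hrec

end Secant

section Symmetrization

variable {Ω : Type*} {mΩ : MeasurableSpace Ω} {μ : Measure Ω} {X : Ω → ℝ}

lemma integrableExpSet_sub_const (c : ℝ) :
    integrableExpSet (fun ω ↦ X ω - c) μ = integrableExpSet X μ := by
  ext t
  simp only [integrableExpSet, mem_ofPred_eq, mul_sub, sub_eq_add_neg (t * _), exp_add]
  exact integrable_mul_const_iff (exp_ne_zero _).isUnit _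

lemma mgf_sub_const_mul_mgf_sub_const_neg (c t : ℝ) :
    mgf (fun ω ↦ X ω - c) μ t * mgf (fun ω ↦ X ω - c) μ (-t) = mgf X μ t * mgf X μ (-t) := by
  simp_rw [sub_eq_add_neg, mgf_add_const]
  rw [mul_mul_mul_comm, ← exp_add]
  simp

-- If `X'` is an independent copy of `X`, then `mgf X μ t * mgf X μ (-t)` is the moment generating
-- function of `X - X'`, so both sides are the `n`-th moment of `X - X'`.
lemma iteratedDeriv_mgf_mul_mgf_neg_zero (hX : 0 ∈ interior (integrableExpSet X μ)) (n : ℕ) :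
    iteratedDeriv n (fun t ↦ mgf X μ t * mgf X μ (-t)) 0 =
      ∑ i ∈ Finset.range (n + 1),
        n.choose i * centralMoment X i μ * ((-1) ^ (n - i) * centralMoment X (n - i) μ) := by
  have hY : 0 ∈ interior (integrableExpSet (fun ω ↦ X ω - μ[X]) μ) := by
    rwa [integrableExpSet_sub_const]
  simp_rw [← mgf_sub_const_mul_mgf_sub_const_neg (X := X) μ[X]]
  rw [iteratedDeriv_mul_comp_neg_zero (analyticAt_mgf hY).contDiffAt]
  simp_rw [iteratedDeriv_mgf_zero hY]
  rfl

variable [IsProbabilityMeasure μ]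

lemma iteratedDeriv_two_mgf_mul_mgf_neg_zero (hX : 0 ∈ interior (integrableExpSet X μ)) :
    iteratedDeriv 2 (fun t ↦ mgf X μ t * mgf X μ (-t)) 0 = 2 * centralMoment X 2 μ := by
  have hzero : centralMoment X 0 μ = 1 := by simp [centralMoment]
  rw [iteratedDeriv_mgf_mul_mgf_neg_zero hX]
  simp only [Finset.sum_range_succ, Finset.sum_range_zero, Nat.choose, Nat.reduceAdd, Nat.reduceSub,
    hzero, centralMoment_one]
  ring

lemma iteratedDeriv_four_mgf_mul_mgf_neg_zero (hX : 0 ∈ interior (integrableExpSet X μ)) :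
    iteratedDeriv 4 (fun t ↦ mgf X μ t * mgf X μ (-t)) 0 =
      2 * centralMoment X 4 μ + 6 * centralMoment X 2 μ ^ 2 := by
  have hzero : centralMoment X 0 μ = 1 := by simp [centralMoment]
  rw [iteratedDeriv_mgf_mul_mgf_neg_zero hX]
  simp only [Finset.sum_range_succ, Finset.sum_range_zero, Nat.choose, Nat.reduceAdd, Nat.reduceSub,
    hzero, centralMoment_one]
  ring

lemma centralMoment_four_of_mgf_mul_mgf_neg_eq_sec {ω : ℝ}
    (hX : 0 ∈ interior (integrableExpSet X μ))
    (hsec : (fun t ↦ mgf X μ t * mgf X μ (-t)) =ᶠ[𝓝 0] fun t ↦ (cos (ω * t))⁻¹) :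
    centralMoment X 4 μ = 7 / 4 * ω ^ 4 := by
  have htwo : centralMoment X 2 μ = ω ^ 2 / 2 := by
    rw [eq_div_iff two_ne_zero, mul_comm, ← iteratedDeriv_two_mgf_mul_mgf_neg_zero hX,
      hsec.iteratedDeriv_eq, iteratedDeriv_two_sec_zero]
  have hfour : 2 * centralMoment X 4 μ + 6 * centralMoment X 2 μ ^ 2 = 5 * ω ^ 4 := by
    rw [← iteratedDeriv_four_mgf_mul_mgf_neg_zero hX, hsec.iteratedDeriv_eq,
      iteratedDeriv_four_sec_zero]
  rw [htwo] at hfour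
  linear_combination hfour / 2

end Symmetrization

section LogGamma

variable {E : Type*} [NormedAddCommGroup E] [NormedSpace ℝ E] {a r t : ℝ}

lemma integral_gammaMeasure (ha : 0 < a) (hr : 0 < r) (f : ℝ → E) :
    ∫ v, f v ∂gammaMeasure a r =
      (r ^ a / Gamma a) • ∫ v in Ioi 0, (v ^ (a - 1) * exp (-(r * v))) • f v := by
  have hmeas : Measurable (gammaPDF a r) := (measurable_gammaPDFReal a r).ennreal_ofReal
  calc ∫ v, f v ∂gammaMeasure a r
      = ∫ v, gammaPDFReal a r v • f v := by
        rw [gammaMeasure, integral_withDensity_eq_integral_toReal_smul hmeas (by simp [gammaPDF])]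
        simp [gammaPDF, gammaPDFReal_nonneg ha hr]
    _ = ∫ v in Ioi 0, gammaPDFReal a r v • f v := by
        rw [← integral_Ici_eq_integral_Ioi, setIntegral_eq_integral_of_forall_compl_eq_zero]
        intro v hv
        simp [gammaPDFReal, show ¬0 ≤ v from hv]
    _ = (r ^ a / Gamma a) • ∫ v in Ioi 0, (v ^ (a - 1) * exp (-(r * v))) • f v := by
        rw [← integral_smul]
        refine setIntegral_congr_fun measurableSet_Ioi fun v hv ↦ ?_
        simp only [gammaPDFReal, if_pos (mem_Ioi.1 hv).le, smul_smul, mul_assoc]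

lemma integral_Ioi_zero_eq_integral_comp_exp (f : ℝ → E) :
    ∫ v in Ioi 0, f v = ∫ y, exp y • f (exp y) := by
  simpa [range_exp] using integral_image_eq_integral_abs_deriv_smul MeasurableSet.univ
    (fun y _ ↦ (hasDerivAt_exp y).hasDerivWithinAt) exp_injective.injOn f

lemma integral_comp_log_gammaMeasure (ha : 0 < a) (hr : 0 < r) (f : ℝ → E) :
    ∫ v, f (log v) ∂gammaMeasure a r =
      (r ^ a / Gamma a) • ∫ y, exp (a * y - r * exp y) • f y := by
  rw [integral_gammaMeasure ha hr, integral_Ioi_zero_eq_integral_comp_exp]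
  congr with y
  rw [log_exp, smul_smul, ← mul_assoc, ← exp_mul, ← exp_add, ← exp_add]
  ring_nf

lemma integral_comp_mul_sub_eq_inv_smul (f : ℝ → E) (c b : ℝ) :
    ∫ x, f (c * x - b) = |c⁻¹| • ∫ y, f y := by
  rw [Measure.integral_comp_mul_left (fun y ↦ f (y - b)), integral_sub_right_eq_self]

lemma integral_comp_log_add_div_gammaMeasure (ha : 0 < a) (hr : 0 < r) {c : ℝ} (hc : 0 < c)
    (b : ℝ) (f : ℝ → E) :
    ∫ v, f ((log v + b) / c) ∂gammaMeasure a r =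
      (c * (r ^ a / Gamma a)) • ∫ x, exp (a * (c * x - b) - r * exp (c * x - b)) • f x := by
  have hsubst := integral_comp_mul_sub_eq_inv_smul
    (fun y ↦ exp (a * y - r * exp y) • f ((y + b) / c)) c b
  simp only [sub_add_cancel, mul_div_cancel_left₀ _ hc.ne', abs_of_pos (inv_pos.2 hc)] at hsubst
  rw [integral_comp_log_gammaMeasure ha hr fun y ↦ f ((y + b) / c), hsubst, smul_smul,
    mul_right_comm, mul_inv_cancel₀ hc.ne', one_mul]

lemma mgf_log_gammaMeasure (ha : 0 < a) (hr : 0 < r) (ht : -a < t) :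
    mgf log (gammaMeasure a r) t = Gamma (a + t) / (Gamma a * r ^ t) := by
  have hpow : ∀ v ∈ Ioi (0 : ℝ), (v ^ (a - 1) * exp (-(r * v))) • exp (t * log v) =
      v ^ (a + t - 1) * exp (-(r * v)) := fun v hv ↦ by
    rw [smul_eq_mul, mul_comm t, ← rpow_def_of_pos hv, mul_right_comm, ← rpow_add hv,
      sub_add_eq_add_sub]
  rw [mgf, integral_gammaMeasure ha hr, smul_eq_mul, setIntegral_congr_fun measurableSet_Ioi hpow,
    integral_rpow_mul_exp_neg_mul_Ioi (neg_lt_iff_pos_add'.1 ht) hr, one_div, inv_rpow hr.le,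
    rpow_add hr]
  have := rpow_pos_of_pos hr a
  field_simp

lemma mgf_log_gammaMeasure_eventuallyEq (ha : 0 < a) (hr : 0 < r) :
    mgf log (gammaMeasure a r) =ᶠ[𝓝 0] fun t ↦ Gamma (a + t) / (Gamma a * r ^ t) :=
  (eventually_gt_nhds (neg_lt_zero.2 ha)).mono fun _ ht ↦ mgf_log_gammaMeasure ha hr ht

lemma zero_mem_interior_integrableExpSet_log_gammaMeasure (ha : 0 < a) (hr : 0 < r) :
    0 ∈ interior (integrableExpSet log (gammaMeasure a r)) := by
  have := isProbabilityMeasure_gammaMeasure ha hr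
  refine mem_interior_iff_mem_nhds.2 <|
    (eventually_gt_nhds (neg_lt_zero.2 ha)).mono fun t ht ↦ mgf_pos_iff.1 ?_
  rw [mgf_log_gammaMeasure ha hr ht]
  have := Gamma_pos_of_pos (neg_lt_iff_pos_add'.1 ht)
  positivity

lemma integral_log_gammaMeasure (ha : 0 < a) (hr : 0 < r) :
    ∫ v, log v ∂gammaMeasure a r = logDeriv Gamma a - log r := by
  have hGamma : HasDerivAt (fun t ↦ Gamma (a + t)) (deriv Gamma a) 0 := by
    have hdiff : DifferentiableAt ℝ Gamma (a + 0) :=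
      differentiableAt_Gamma fun m ↦ by linarith [(m.cast_nonneg : (0 : ℝ) ≤ m)]
    simpa using hdiff.hasDerivAt.comp_const_add a 0
  have hpow : HasDerivAt (fun t : ℝ ↦ Gamma a * r ^ t) (Gamma a * log r) 0 := by
    simpa using ((hasDerivAt_id 0).const_rpow hr).const_mul (Gamma a)
  have hGamma_ne : Gamma a ≠ 0 := (Gamma_pos_of_pos ha).ne'
  rw [← deriv_mgf_zero (zero_mem_interior_integrableExpSet_log_gammaMeasure ha hr),
    (mgf_log_gammaMeasure_eventuallyEq ha hr).deriv_eq,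
    (hGamma.fun_div hpow (by simpa using hGamma_ne)).deriv, logDeriv_apply]
  simp only [add_zero, rpow_zero, mul_one]
  field_simp

lemma integral_log_gammaMeasure_one_half (hr : 0 < r) :
    ∫ v, log v ∂gammaMeasure (1 / 2) r = -(eulerMascheroniConstant + 2 * log 2 + log r) := by
  rw [integral_log_gammaMeasure one_half_pos hr, logDeriv_apply, hasDerivAt_Gamma_one_half.deriv,
    Gamma_one_half_eq]
  field_simp
  ring

lemma Gamma_one_half_add_mul_Gamma_one_half_sub (t : ℝ) :
    Gamma (1 / 2 + t) * Gamma (1 / 2 - t) = π / cos (π * t) := by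
  rw [← sin_add_pi_div_two, show π * t + π / 2 = π * (1 / 2 + t) by ring,
    ← Gamma_mul_Gamma_one_sub]
  ring_nf

lemma mgf_log_gammaMeasure_one_half_mul_mgf_neg (hr : 0 < r) (ht : |t| < 1 / 2) :
    mgf log (gammaMeasure (1 / 2) r) t * mgf log (gammaMeasure (1 / 2) r) (-t) =
      (cos (π * t))⁻¹ := by
  obtain ⟨ht_lower, ht_upper⟩ := abs_lt.1 ht
  rw [mgf_log_gammaMeasure one_half_pos hr ht_lower,
    mgf_log_gammaMeasure one_half_pos hr (neg_lt_neg ht_upper), div_mul_div_comm, ← sub_eq_add_neg,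
    Gamma_one_half_add_mul_Gamma_one_half_sub, mul_mul_mul_comm, ← rpow_add hr, Gamma_one_half_eq,
    mul_self_sqrt pi_nonneg]
  simp [pi_ne_zero, div_div_cancel_left']

lemma centralMoment_four_log_gammaMeasure_one_half (hr : 0 < r) :
    centralMoment log 4 (gammaMeasure (1 / 2) r) = 7 / 4 * π ^ 4 := by
  have := isProbabilityMeasure_gammaMeasure one_half_pos hr
  refine centralMoment_four_of_mgf_mul_mgf_neg_eq_sec
    (zero_mem_interior_integrableExpSet_log_gammaMeasure one_half_pos hr) ?_
  filter_upwards [Metric.ball_mem_nhds (0 : ℝ) one_half_pos] with t ht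
  exact mgf_log_gammaMeasure_one_half_mul_mgf_neg hr (by simpa using ht)

end LogGamma

section Gumbel

/-- The doubly exponential density `g`, with `z = π x / √2 - γ` written out. -/
noncomputable def gumbelDensity (x : ℝ) : ℝ :=
  (1 / 2) * √(π / 2) *
    exp (-(1 / 4) * exp (π * x / √2 - eulerMascheroniConstant) +
      (π * x / √2 - eulerMascheroniConstant) / 2)

lemma gumbelDensity_eq (x : ℝ) :
    gumbelDensity x = π / √2 * ((1 / 4) ^ (1 / 2 : ℝ) / Gamma (1 / 2)) *
      exp (1 / 2 * (π / √2 * x - eulerMascheroniConstant) -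
        1 / 4 * exp (π / √2 * x - eulerMascheroniConstant)) := by
  have hnorm : 1 / 2 * √(π / 2) = π / √2 * ((1 / 4) ^ (1 / 2 : ℝ) / Gamma (1 / 2)) := by
    have hsqrt : √(1 / 4 : ℝ) = 1 / 2 := by
      rw [show (1 / 4 : ℝ) = (1 / 2) ^ 2 by norm_num, sqrt_sq one_half_pos.le]
    rw [← sqrt_eq_rpow, hsqrt, Gamma_one_half_eq, sqrt_div pi_nonneg]
    field_simp
    exact sq_sqrt pi_nonneg
  rw [gumbelDensity, hnorm, div_mul_eq_mul_div]
  ring_nf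

lemma integral_gumbelDensity_smul {E : Type*} [NormedAddCommGroup E] [NormedSpace ℝ E]
    (f : ℝ → E) :
    ∫ x, gumbelDensity x • f x =
      ∫ v, f ((log v + eulerMascheroniConstant) / (π / √2)) ∂gammaMeasure (1 / 2) (1 / 4) := by
  rw [integral_comp_log_add_div_gammaMeasure one_half_pos (by norm_num) (by positivity),
    ← integral_smul]
  simp_rw [gumbelDensity_eq, smul_smul]

lemma integral_log_gammaMeasure_one_half_one_fourth :
    ∫ v, log v ∂gammaMeasure (1 / 2) (1 / 4) = -eulerMascheroniConstant := by
  have hlog : log (1 / 4) = -(2 * log 2) := by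
    rw [one_div, log_inv, show (4 : ℝ) = 2 ^ 2 by norm_num, log_pow, Nat.cast_ofNat]
  rw [integral_log_gammaMeasure_one_half (by norm_num), hlog, add_neg_cancel_right]

lemma integral_log_add_eulerMascheroniConstant_pow_four :
    ∫ v, (log v + eulerMascheroniConstant) ^ 4 ∂gammaMeasure (1 / 2) (1 / 4) = 7 / 4 * π ^ 4 := by
  rw [← centralMoment_four_log_gammaMeasure_one_half (r := 1 / 4) (by norm_num), centralMoment,
    integral_log_gammaMeasure_one_half_one_fourth]
  simp

end Gumbel

/-- The fourth moment of the doubly exponential density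
`g(x) = (1/2)√(π/2) exp(-(1/4)e^z + z/2)`, `z = πx/√2 - γ`, equals `7`. -/
theorem gumbel_density_fourth_moment :
    ∫ x : ℝ, x ^ 4 * ((1 / 2) * Real.sqrt (Real.pi / 2)
        * Real.exp (-(1 / 4) * Real.exp (Real.pi * x / Real.sqrt 2
            - Real.eulerMascheroniConstant)
          + (Real.pi * x / Real.sqrt 2 - Real.eulerMascheroniConstant) / 2))
      = 7 := by
  have hsqrt : √2 ^ 4 = 4 := by
    rw [show √2 ^ 4 = (√2 ^ 2) ^ 2 by ring, sq_sqrt zero_le_two]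
    norm_num
  calc ∫ x, x ^ 4 * gumbelDensity x
      = ∫ x, gumbelDensity x * x ^ 4 := by simp_rw [mul_comm]
    _ = ∫ v, ((log v + eulerMascheroniConstant) / (π / √2)) ^ 4 ∂gammaMeasure (1 / 2) (1 / 4) :=
        integral_gumbelDensity_smul (· ^ 4)
    _ = 7 / 4 * π ^ 4 / (π / √2) ^ 4 := by
        simp_rw [div_pow _ (π / √2)]
        rw [integral_div, integral_log_add_eulerMascheroniConstant_pow_four]
    _ = 7 := by
        rw [div_pow, hsqrt]
        field_simp
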